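/- Fix a real number a with a > 3^{1/5}. Then there exists N ∈ ℕ such that for all n ≥ N, ∫_0^1 |gₙ′(u)| du ≥ 3ⁿ a^{−4n} / (2π (1 + 2π)⁴) − 1. -/

import Mathlib

/-!
Up to the factor `3ⁿ a^{-5n}`, the function `gₙ` is the chirp `f(u) = u⁵ sin(B/u)` with `B = aⁿ`, so
it is enough to bound the total variation of `f` on `[0, 1]` below by a multiple of `|B|`, uniformly
in `B`. Let `B ≥ 0`.

* Testing `f'` against `-cos(B/u)` gives `|f'(u)| ≥ -cos(B/u) f'(u)`. By the double angle formulas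
  the right-hand side is `B u³ / 2`, plus a term of size `u⁴`, plus a multiple of the derivative of
  the chirp of frequency `2B`. Integrating over `[0, b]` gives `B b⁴ / 8 - b⁵ / 2`; the choice
  `b = 1/4` settles every `B ≥ 3/2`.
* If `B ≤ 3/2`, the increment `f(1) - f(0) = sin B ≥ 2B/π` is already large enough.
-/

section Chirp

open Real Set Filter Topology intervalIntegral

/-- The chirp `u ↦ uᵏ sin(B/u)` of frequency `B`. For `k ≠ 0` the convention `B / 0 = 0` is
harmless, as the factor `uᵏ` gives the intended value `0` at the origin. -/
noncomputable def chirp (k : ℕ) (B u : ℝ) : ℝ := u ^ k * sin (B / u)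

variable (k : ℕ) (B : ℝ)

lemma chirp_neg : chirp k (-B) = -chirp k B := by
  ext u
  simp [chirp, neg_div]

lemma chirp_le_pow {u : ℝ} (hu : 0 ≤ u) : chirp k B u ≤ u ^ k :=
  mul_le_of_le_one_right (pow_nonneg hu k) (sin_le_one _)

lemma continuous_pow_succ_mul_comp_div {φ : ℝ → ℝ} (hφ : Continuous φ) {M : ℝ}
    (hM : ∀ t, |φ t| ≤ M) : Continuous fun u : ℝ => u ^ (k + 1) * φ (B / u) := by
  refine continuous_iff_continuousAt.2 fun u => ?_
  rcases eq_or_ne u 0 with rfl | hu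
  · have hpow : Tendsto (fun u : ℝ => u ^ (k + 1)) (𝓝 0) (𝓝 0) := by
      simpa using (continuous_pow (M := ℝ) (k + 1)).tendsto 0
    have hbdd : IsBoundedUnder (· ≤ ·) (𝓝 (0 : ℝ)) (norm ∘ fun u => φ (B / u)) :=
      isBoundedUnder_of ⟨M, fun u => hM _⟩
    simpa [ContinuousAt] using hpow.zero_mul_isBoundedUnder_le hbdd
  · exact (continuousAt_id.pow _).mul
      (hφ.continuousAt.comp (continuousAt_const.div continuousAt_id hu))

lemma continuous_chirp_succ : Continuous (chirp (k + 1) B) :=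
  continuous_pow_succ_mul_comp_div k B continuous_sin abs_sin_le_one

lemma hasDerivAt_chirp_of_ne_zero {u : ℝ} (hu : u ≠ 0) :
    HasDerivAt (chirp (k + 3) B)
      ((k + 3) * chirp (k + 2) B u - B * (u ^ (k + 1) * cos (B / u))) u := by
  have hdiv : HasDerivAt (fun u : ℝ => B / u) (-B / u ^ 2) u := by
    simpa using (hasDerivAt_const u B).fun_div (hasDerivAt_id' u) hu
  refine ((hasDerivAt_pow (k + 3) u).mul hdiv.sin).congr_deriv ?_
  simp only [chirp]
  push_cast
  field_simp
  ring

lemma continuous_mul_chirp_sub_mul_cos : Continuous fun u : ℝ =>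
    (k + 3) * chirp (k + 2) B u - B * (u ^ (k + 1) * cos (B / u)) :=
  (continuous_const.mul (continuous_chirp_succ (k + 1) B)).sub
    (continuous_const.mul (continuous_pow_succ_mul_comp_div k B continuous_cos abs_cos_le_one))

lemma hasDerivAt_chirp (u : ℝ) :
    HasDerivAt (chirp (k + 3) B)
      ((k + 3) * chirp (k + 2) B u - B * (u ^ (k + 1) * cos (B / u))) u :=
  hasDerivAt_of_hasDerivAt_of_ne' (fun _ hu => hasDerivAt_chirp_of_ne_zero k B hu)
    (continuous_chirp_succ (k + 2) B).continuousAt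
    (continuous_mul_chirp_sub_mul_cos k B).continuousAt u

lemma continuous_deriv_chirp : Continuous (deriv (chirp (k + 3) B)) := by
  rw [funext fun u => (hasDerivAt_chirp k B u).deriv]
  exact continuous_mul_chirp_sub_mul_cos k B

lemma integral_deriv_chirp (b : ℝ) :
    ∫ u in 0..b, deriv (chirp (k + 3) B) u = chirp (k + 3) B b := by
  rw [integral_deriv_eq_sub (fun u _ => (hasDerivAt_chirp k B u).differentiableAt)
    ((continuous_deriv_chirp k B).intervalIntegrable 0 b)]
  simp [chirp]

lemma abs_chirp_le_integral_abs_deriv {b : ℝ} (hb : 0 ≤ b) :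
    |chirp (k + 3) B b| ≤ ∫ u in 0..b, |deriv (chirp (k + 3) B) u| := by
  rw [← integral_deriv_chirp]
  exact abs_integral_le_integral_abs hb

lemma neg_cos_mul_deriv_chirp (u : ℝ) :
    -cos (B / u) * deriv (chirp (k + 3) B) u =
      B / 2 * u ^ (k + 1) - (k + 3) / 4 * chirp (k + 2) (2 * B) u
        - deriv (chirp (k + 3) (2 * B)) u / 4 := by
  rw [(hasDerivAt_chirp k B u).deriv, (hasDerivAt_chirp k (2 * B) u).deriv]
  simp only [chirp, mul_div_assoc 2 B u, sin_two_mul, cos_two_mul]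
  ring

lemma le_abs_deriv_chirp {u : ℝ} (hu : 0 ≤ u) :
    B / 2 * u ^ (k + 1) - (k + 3) / 4 * u ^ (k + 2) - deriv (chirp (k + 3) (2 * B)) u / 4 ≤
      |deriv (chirp (k + 3) B) u| := by
  calc B / 2 * u ^ (k + 1) - (k + 3) / 4 * u ^ (k + 2) - deriv (chirp (k + 3) (2 * B)) u / 4
      ≤ -cos (B / u) * deriv (chirp (k + 3) B) u := by
        rw [neg_cos_mul_deriv_chirp]
        gcongr
        exact chirp_le_pow (k + 2) (2 * B) hu
    _ ≤ |cos (B / u)| * |deriv (chirp (k + 3) B) u| := by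
        rw [← abs_neg (cos _), ← abs_mul]
        exact le_abs_self _
    _ ≤ |deriv (chirp (k + 3) B) u| :=
        mul_le_of_le_one_left (abs_nonneg _) (abs_cos_le_one _)

lemma sub_le_integral_abs_deriv_chirp {b : ℝ} (hb : 0 ≤ b) :
    B * b ^ (k + 2) / (2 * (k + 2)) - b ^ (k + 3) / 2 ≤
      ∫ u in 0..b, |deriv (chirp (k + 3) B) u| := by
  have hderiv := continuous_deriv_chirp k (2 * B)
  calc B * b ^ (k + 2) / (2 * (k + 2)) - b ^ (k + 3) / 2
      ≤ B * b ^ (k + 2) / (2 * (k + 2)) - b ^ (k + 3) / 4 - chirp (k + 3) (2 * B) b / 4 := by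
        linarith [chirp_le_pow (k + 3) (2 * B) hb]
    _ = ∫ u in 0..b, (B / 2 * u ^ (k + 1) - (k + 3) / 4 * u ^ (k + 2)
          - deriv (chirp (k + 3) (2 * B)) u / 4) := by
        rw [integral_sub (Continuous.intervalIntegrable (by fun_prop) _ _)
            (Continuous.intervalIntegrable (by fun_prop) _ _),
          integral_sub (Continuous.intervalIntegrable (by fun_prop) _ _)
            (Continuous.intervalIntegrable (by fun_prop) _ _),
          integral_div, integral_deriv_chirp, integral_const_mul, integral_const_mul,
          integral_pow, integral_pow]
        push_cast
        field_simp
        ring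
    _ ≤ ∫ u in 0..b, |deriv (chirp (k + 3) B) u| :=
        integral_mono_on hb (Continuous.intervalIntegrable (by fun_prop) _ _)
          ((continuous_deriv_chirp k B).abs.intervalIntegrable _ _)
          fun u hu => le_abs_deriv_chirp k B hu.1

lemma abs_div_le_integral_abs_deriv_chirp_five :
    |B| / 6144 ≤ ∫ u in 0..1, |deriv (chirp 5 B) u| := by
  wlog hB : 0 ≤ B generalizing B
  · simpa [chirp_neg, deriv.neg'] using this (-B) (by linarith)
  rw [abs_of_nonneg hB]
  rcases le_total B (3 / 2) with hsmall | hlarge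
  · have hsin : 2 / π * B ≤ sin B := mul_le_sin hB (by linarith [pi_gt_three])
    have hpi : 1 / 6144 ≤ 2 / π := by
      rw [div_le_div_iff₀ (by norm_num) pi_pos]
      linarith [pi_le_four]
    calc B / 6144 = 1 / 6144 * B := by ring
      _ ≤ 2 / π * B := by gcongr
      _ ≤ |chirp 5 B 1| := by simpa [chirp] using hsin.trans (le_abs_self _)
      _ ≤ _ := abs_chirp_le_integral_abs_deriv 2 B zero_le_one
  · calc B / 6144 ≤ B * (1 / 4) ^ 4 / (2 * (2 + 2)) - (1 / 4) ^ 5 / 2 := by linarith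
      _ ≤ ∫ u in 0..(1 / 4), |deriv (chirp 5 B) u| := by
        exact_mod_cast sub_le_integral_abs_deriv_chirp 2 B (b := 1 / 4) (by norm_num)
      _ ≤ ∫ u in 0..1, |deriv (chirp 5 B) u| :=
        integral_mono_interval le_rfl (by norm_num) (by norm_num)
          (Eventually.of_forall fun _ => abs_nonneg _)
          ((continuous_deriv_chirp 2 B).abs.intervalIntegrable _ _)

end Chirp

lemma le_two_pi_mul_one_add_two_pi_pow : 6144 ≤ 2 * Real.pi * (1 + 2 * Real.pi) ^ 4 := by
  have hpi := Real.pi_gt_three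
  calc (6144 : ℝ) ≤ 2 * 3 * (1 + 2 * 3) ^ 4 := by norm_num
    _ ≤ 2 * Real.pi * (1 + 2 * Real.pi) ^ 4 := by gcongr

theorem integral_abs_deriv_lower_bound_general {a : ℝ} (ha : a ≠ 0) (g : ℕ → ℝ → ℝ)
    (hg : ∀ (n : ℕ) (u : ℝ), u ≠ 0 →
      g n u = 3 ^ n * (a ^ (5 * n))⁻¹ * u ^ 5 * Real.sin (a ^ n / u))
    (hg0 : ∀ n : ℕ, g n 0 = 0) (n : ℕ) :
    3 ^ n * (a ^ (4 * n))⁻¹ / (2 * Real.pi * (1 + 2 * Real.pi) ^ 4) ≤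
      ∫ u in Set.Icc (0 : ℝ) 1, |deriv (g n) u| := by
  set c : ℝ := 3 ^ n * (a ^ (5 * n))⁻¹
  have hgn : g n = fun u => c * chirp 5 (a ^ n) u := by
    ext u
    rcases eq_or_ne u 0 with rfl | hu
    · simp [hg0, chirp]
    · rw [hg n u hu, chirp, mul_assoc]
  have hscale : 3 ^ n * (a ^ (4 * n))⁻¹ = |c| * |a ^ n| := by
    have hpow : 0 ≤ a ^ (4 * n) := (Even.mul_right (by decide) n).pow_nonneg a
    rw [← abs_mul, ← abs_of_nonneg (by positivity : 0 ≤ 3 ^ n * (a ^ (4 * n))⁻¹)]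
    congr 1
    simp only [c]
    field_simp
    ring
  calc 3 ^ n * (a ^ (4 * n))⁻¹ / (2 * Real.pi * (1 + 2 * Real.pi) ^ 4)
      ≤ |c| * |a ^ n| / 6144 := by
        rw [hscale]
        gcongr
        exact le_two_pi_mul_one_add_two_pi_pow
    _ ≤ |c| * ∫ u in (0 : ℝ)..1, |deriv (chirp 5 (a ^ n)) u| := by
        rw [mul_div_assoc]
        gcongr
        exact abs_div_le_integral_abs_deriv_chirp_five (a ^ n)
    _ = ∫ u in Set.Icc (0 : ℝ) 1, |deriv (g n) u| := by
        rw [MeasureTheory.integral_Icc_eq_integral_Ioc,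
          ← intervalIntegral.integral_of_le zero_le_one, ← intervalIntegral.integral_const_mul]
        simp only [hgn, deriv_const_mul_field, abs_mul]

/-- Case `a > 3^{1/5}`, lower bound on the total variation: with
`gₙ(u) = 3ⁿ a^{-5n} u⁵ sin(aⁿ/u)` (and `gₙ(0) = 0`), for all large `n`,
`∫_0^1 |gₙ'(u)| du ≥ 3ⁿ a^{-4n} / (2π (1 + 2π)⁴) - 1`. -/
theorem integral_abs_deriv_lower_bound (a : ℝ) (ha : (3 : ℝ) ^ ((1 : ℝ) / 5) < a)
    (g : ℕ → ℝ → ℝ)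
    (hg : ∀ (n : ℕ) (u : ℝ), u ≠ 0 →
      g n u = 3 ^ n * (a ^ (5 * n))⁻¹ * u ^ 5 * Real.sin (a ^ n / u))
    (hg0 : ∀ n : ℕ, g n 0 = 0) :
    ∃ N : ℕ, ∀ n : ℕ, N ≤ n →
      3 ^ n * (a ^ (4 * n))⁻¹ / (2 * Real.pi * (1 + 2 * Real.pi) ^ 4) - 1 ≤
        ∫ u in Set.Icc (0 : ℝ) 1, |deriv (g n) u| := by
  have ha0 : a ≠ 0 := ((Real.rpow_pos_of_pos three_pos _).trans ha).ne'
  exact ⟨0, fun n _ =>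
    (sub_le_self _ zero_le_one).trans (integral_abs_deriv_lower_bound_general ha0 g hg hg0 n)⟩
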